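/- arXiv:2003.04076 — 2 statements merged into one kernel-verified Lean document; each statement's English description precedes it below -/
import Mathlib

section
/- Let A be a finite set of integers with min 0, max b, gcd 1. If N ≥ 2⌊b/2⌋ and 0 ≤ n ≤ Nb with n ∉ E(A) ∪ (Nb - E(b-A)), then n ∈ NA. -/
/-!
A multiset `S` of elements of `A` with `S.sum ≡ n (mod b)`
can be completed by copies of `b` and `0` to a representation of `n` by exactly `N` elements as
soon as `S.sum ≤ n` and `b * |S| - S.sum ≤ N * b - n` (`mem_nfold_of_good`). Call such an `S` good.

The hypothesis on `n` gives a multiset `S₁` with `S₁.sum ≤ n`, and the hypothesis on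
`N * b - n` gives a multiset `S₂` with `b * |S₂| - S₂.sum ≤ N * b - n`, both with sum `≡ n`.
Discarding sub-multisets whose sum is divisible by `b` preserves these properties, so both may be
taken zero-sum-free modulo `b`. If neither is good, `S₁` violates the second inequality and `S₂`
the first; `exists_good` then produces a good multiset by induction on `|S₁ ∪ S₂|`.

* If `|S₁ ∪ S₂| ≤ b`, adding the two violated inequalities gives `N + 2 ≤ |S₁ ∪ S₂| ≤ b`, which
  contradicts `N ≥ 2⌊b/2⌋ ≥ b - 1`.
* Otherwise write `S₁ = W + X` and `S₂ = W + Y` with `W = S₁ ∩ S₂`. In a zero-sum-free sequence the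
  sums of the nonempty prefixes are distinct and nonzero modulo `b`. Listing `X` before `W`, the
  prefixes of `X, W` and the proper prefixes of `Y` have together more than `b - 1` sums, so two of
  them agree: `U + w ≡ V` with `0 ≠ U ≤ X`, `w ≤ W` and `V < Y`. The multiset
  `M = S₁ - (U + w) + V` satisfies `S₁ ∪ M ≤ W + X + V` and `M ∪ S₂ ≤ W + (X - U) + Y`, which are
  both smaller than `S₁ ∪ S₂`. A zero-sum-free reduction of `M` is good, or it violates one of the
  two inequalities and can replace `S₂` or `S₁`.
-/

/-- The `N`-fold sumset of a set of integers. -/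
def nfold (A : Set ℤ) (N : ℕ) : Set ℤ :=
  {x | ∃ f : Fin N → ℤ, (∀ i, f i ∈ A) ∧ ∑ i, f i = x}

/-- Nonnegative integer combinations of the elements of a finite set of integers. -/
def combos (A : Finset ℤ) : Set ℤ :=
  {n | ∃ c : ℤ → ℕ, ∑ a ∈ A, (c a : ℤ) * a = n}

/-- The exceptional set: nonnegative integers not representable. -/
def excep (A : Finset ℤ) : Set ℤ :=
  {n | 0 ≤ n ∧ n ∉ combos A}

/-- `S` is zero-sum-free modulo `b`: no nonempty sub-multiset has sum divisible by `b`. -/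
def ZeroSumFree (b : ℤ) (S : Multiset ℤ) : Prop :=
  ∀ T ≤ S, T ≠ 0 → ¬ b ∣ T.sum

lemma ZeroSumFree.mono {b : ℤ} {S T : Multiset ℤ} (h : ZeroSumFree b S) (hT : T ≤ S) :
    ZeroSumFree b T :=
  fun R hR hR0 => h R (hR.trans hT) hR0

lemma exists_zeroSumFree_le (b : ℤ) (S : Multiset ℤ) :
    ∃ T ≤ S, ZeroSumFree b T ∧ b ∣ S.sum - T.sum := by
  induction S using Multiset.strongInductionOn with
  | ih S ih =>
    by_cases h : ZeroSumFree b S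
    · exact ⟨S, le_rfl, h, by simp⟩
    · unfold ZeroSumFree at h
      push Not at h
      obtain ⟨R, hRS, hR0, hR⟩ := h
      obtain ⟨Q, rfl⟩ := Multiset.le_iff_exists_add.1 hRS
      have hlt : Q < R + Q := by
        refine lt_of_le_of_ne (Multiset.le_add_left _ _) fun h => hR0 ?_
        simpa using h
      obtain ⟨T, hT, hfree, hdvd⟩ := ih Q hlt
      refine ⟨T, hT.trans hlt.le, hfree, ?_⟩
      rw [Multiset.sum_add, add_sub_assoc]
      exact dvd_add hR hdvd

/-- Distinct nonempty prefixes of a zero-sum-free sequence have incongruent sums: the difference of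
two prefix sums is the sum of the segment between them. -/
lemma ZeroSumFree.take_eq {b : ℤ} {L : List ℤ} (h : ZeroSumFree b (L : Multiset ℤ)) {i j : ℕ}
    (hij : i ≤ j) (hj : j ≤ L.length) (hd : b ∣ (L.take j).sum - (L.take i).sum) : i = j := by
  by_contra hne
  have hsplit : L.take j = L.take i ++ (L.drop i).take (j - i) := by
    rw [← List.take_add]
    congr 1
    omega
  refine h (((L.drop i).take (j - i) : List ℤ) : Multiset ℤ) ?_ ?_ ?_
  · exact Multiset.coe_le.2
      ((List.take_sublist _ _).trans (List.drop_sublist _ _)).subperm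
  · intro h0
    have := congrArg Multiset.card h0
    simp at this
    omega
  · rw [hsplit] at hd
    simpa using hd

lemma exists_prefix_sum_eq {b : ℤ} (hb : 0 < b) {L₁ L₂ : List ℤ}
    (h₁ : ZeroSumFree b (L₁ : Multiset ℤ)) (h₂ : ZeroSumFree b (L₂ : Multiset ℤ))
    (hlen : b ≤ (L₁.length : ℤ) + L₂.length) :
    ∃ i j, 0 < i ∧ i ≤ L₁.length ∧ 0 < j ∧ j ≤ L₂.length ∧
      b ∣ (L₁.take i).sum - (L₂.take j).sum := by
  by_contra! hcon
  have key : ∀ L : List ℤ, ZeroSumFree b (L : Multiset ℤ) →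
      ((Finset.Icc 1 L.length).image fun i => (L.take i).sum % b) ⊆ Finset.Ioo 0 b ∧
      ((Finset.Icc 1 L.length).image fun i => (L.take i).sum % b).card = L.length := by
    intro L hL
    constructor
    · intro x hx
      simp only [Finset.mem_image, Finset.mem_Icc, Finset.mem_Ioo] at hx ⊢
      obtain ⟨i, ⟨hi1, hi⟩, rfl⟩ := hx
      refine ⟨lt_of_le_of_ne (Int.emod_nonneg _ hb.ne') fun h => ?_, Int.emod_lt_of_pos _ hb⟩
      have := hL.take_eq (Nat.zero_le i) hi (by simpa using Int.dvd_of_emod_eq_zero h.symm)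
      omega
    · rw [Finset.card_image_of_injOn]
      · simp
      · intro i hi j hj hij
        simp only [Finset.coe_Icc, Set.mem_Icc] at hi hj
        rcases le_total i j with h | h
        · exact hL.take_eq h hj.2 (Int.ModEq.dvd hij)
        · exact (hL.take_eq h hi.2 (Int.ModEq.dvd hij.symm)).symm
  obtain ⟨hs₁, hc₁⟩ := key L₁ h₁
  obtain ⟨hs₂, hc₂⟩ := key L₂ h₂
  have hdisj : Disjoint ((Finset.Icc 1 L₁.length).image fun i => (L₁.take i).sum % b)
      ((Finset.Icc 1 L₂.length).image fun i => (L₂.take i).sum % b) := by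
    rw [Finset.disjoint_left]
    intro x hx hy
    simp only [Finset.mem_image, Finset.mem_Icc] at hx hy
    obtain ⟨i, hi, rfl⟩ := hx
    obtain ⟨j, hj, hij⟩ := hy
    exact hcon i j hi.1 hi.2 hj.1 hj.2 (Int.ModEq.dvd hij)
  have hcard := Finset.card_le_card (Finset.union_subset hs₁ hs₂)
  rw [Finset.card_union_of_disjoint hdisj, hc₁, hc₂, Int.card_Ioo] at hcard
  omega

/-- The exchange step: long enough zero-sum-free multisets `X + W` and `Y` have sub-multisets
with congruent sums, where the first meets `X` and the second is not all of `Y`. -/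
lemma exists_exchange {b : ℤ} (hb : 0 < b) {W X Y : Multiset ℤ}
    (h₁ : ZeroSumFree b (W + X)) (h₂ : ZeroSumFree b Y) (hX : X ≠ 0)
    (hcard : b + 1 ≤ (W.card : ℤ) + X.card + Y.card) :
    ∃ U w V, U ≤ X ∧ U ≠ 0 ∧ w ≤ W ∧ V ≤ Y ∧ V.card < Y.card ∧
      b ∣ U.sum + w.sum - V.sum := by
  have hL₁ : ZeroSumFree b ((X.toList ++ W.toList : List ℤ) : Multiset ℤ) := by
    rw [← Multiset.coe_add, Multiset.coe_toList, Multiset.coe_toList, add_comm]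
    exact h₁
  have htail : ((Y.toList.tail : List ℤ) : Multiset ℤ) ≤ Y := by
    conv_rhs => rw [← Multiset.coe_toList Y]
    exact Multiset.coe_le.2 (List.tail_sublist _).subperm
  obtain ⟨i, j, hi, -, hj, hj', hd⟩ := exists_prefix_sum_eq hb hL₁ (h₂.mono htail) (by
    simp only [List.length_append, List.length_tail, Multiset.length_toList]
    omega)
  refine ⟨(X.toList.take i : List ℤ), (W.toList.take (i - X.toList.length) : List ℤ),
    (Y.toList.tail.take j : List ℤ), ?_, ?_, ?_, ?_, ?_, ?_⟩
  · conv_rhs => rw [← Multiset.coe_toList X]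
    exact Multiset.coe_le.2 (List.take_sublist _ _).subperm
  · intro h0
    have := congrArg Multiset.card h0
    have hX' := Multiset.card_pos.2 hX
    rw [Multiset.coe_card, List.length_take, Multiset.length_toList, Multiset.card_zero] at this
    omega
  · conv_rhs => rw [← Multiset.coe_toList W]
    exact Multiset.coe_le.2 (List.take_sublist _ _).subperm
  · exact le_trans (Multiset.coe_le.2 (List.take_sublist _ _).subperm) htail
  · rw [List.length_tail, Multiset.length_toList] at hj'
    rw [Multiset.coe_card, List.length_take, List.length_tail, Multiset.length_toList]
    omega
  · rw [List.take_append, List.sum_append] at hd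
    simpa using hd

lemma sum_bounds {b : ℤ} {S : Multiset ℤ} (hS : ∀ x ∈ S, 0 ≤ x ∧ x ≤ b) :
    0 ≤ S.sum ∧ S.sum ≤ b * S.card := by
  refine ⟨Multiset.sum_nonneg fun x hx => (hS x hx).1, ?_⟩
  have := Multiset.sum_le_card_nsmul S b fun x hx => (hS x hx).2
  simpa [mul_comm] using this

lemma sum_bounds_of_le {b : ℤ} {S T : Multiset ℤ} (hS : ∀ x ∈ S, 0 ≤ x ∧ x ≤ b) (hT : T ≤ S) :
    T.sum ≤ S.sum ∧ b * T.card - T.sum ≤ b * S.card - S.sum := by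
  obtain ⟨Q, rfl⟩ := Multiset.le_iff_exists_add.1 hT
  have := sum_bounds fun x hx => hS x (Multiset.mem_add.2 (Or.inr hx))
  simp only [Multiset.sum_add, Multiset.card_add]
  push_cast
  constructor <;> linarith

/-- If `S₁` fails the second and `S₂` the first of the inequalities `S.sum ≤ n` and
`b * |S| - S.sum ≤ N * b - n`, and both are zero-sum-free, some
multiset satisfies both. The induction on `|S₁ ∪ S₂|` replaces
one of the two by a zero-sum-free reduction of the result of an exchange between them. -/
lemma exists_good {A : Finset ℤ} {b : ℤ} (hb : 0 < b) (hA : ∀ x ∈ A, 0 ≤ x ∧ x ≤ b)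
    {N : ℕ} (hN : b - 1 ≤ N) {n : ℤ} (m : ℕ) :
    ∀ S₁ S₂ : Multiset ℤ, (S₁ ∪ S₂).card ≤ m →
      (∀ x ∈ S₁, x ∈ A) → (∀ x ∈ S₂, x ∈ A) →
      ZeroSumFree b S₁ → ZeroSumFree b S₂ → b ∣ n - S₁.sum → b ∣ n - S₂.sum →
      N * b - n < b * S₁.card - S₁.sum → n < S₂.sum →
      ∃ S : Multiset ℤ, (∀ x ∈ S, x ∈ A) ∧ b ∣ n - S.sum ∧ S.sum ≤ n ∧
        b * S.card - S.sum ≤ N * b - n := by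
  induction m using Nat.strong_induction_on with
  | _ m ih =>
  intro S₁ S₂ hm hA₁ hA₂ hf₁ hf₂ hd₁ hd₂ hR hL
  obtain ⟨W, hW⟩ : ∃ W, W = S₁ ∩ S₂ := ⟨_, rfl⟩
  obtain ⟨X, hX⟩ := Multiset.le_iff_exists_add.1 (hW ▸ Multiset.inter_le_left : W ≤ S₁)
  obtain ⟨Y, hY⟩ := Multiset.le_iff_exists_add.1 (hW ▸ Multiset.inter_le_right : W ≤ S₂)
  have hcard : (S₁ ∪ S₂).card = W.card + X.card + Y.card := by
    have h := congrArg Multiset.card (Multiset.union_add_inter S₁ S₂)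
    rw [← hW] at h
    have h1 := congrArg Multiset.card hX
    have h2 := congrArg Multiset.card hY
    simp only [Multiset.card_add] at h h1 h2
    omega
  clear hW
  rw [hcard] at hm
  subst hX hY
  by_cases hsmall : (W.card : ℤ) + X.card + Y.card ≤ b
  · exfalso
    -- Both strict inequalities are between integers congruent modulo `b`, so they gain a full `b`.
    have hR' : N * b - n + b ≤ b * (W + X).card - (W + X).sum := by
      obtain ⟨k, hk⟩ := hd₁
      have : n - (W + X).sum = b * k := hk
      have hlt : b * (N - k) < b * (W + X).card := by linarith
      have := lt_of_mul_lt_mul_left hlt hb.le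
      nlinarith
    have hL' : n + b ≤ (W + Y).sum := by
      obtain ⟨k, hk⟩ := hd₂
      have hlt : b * k < b * 0 := by linarith
      have := lt_of_mul_lt_mul_left hlt hb.le
      nlinarith
    have hXb := sum_bounds fun x hx => hA x (hA₁ x (Multiset.mem_add.2 (Or.inr hx)))
    have hYb := sum_bounds fun x hx => hA x (hA₂ x (Multiset.mem_add.2 (Or.inr hx)))
    simp only [Multiset.sum_add, Multiset.card_add] at hR' hL'
    push_cast at hR'
    have hle : b * ((N : ℤ) + 2) ≤ b * (W.card + X.card + Y.card) := by linarith
    have := le_of_mul_le_mul_left hle hb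
    linarith
  · have hX0 : X ≠ 0 := by
      rintro rfl
      -- Now `Y` has sum divisible by `b`, so `Y = 0` and `S₁ = S₂ = W`. The two violated
      -- inequalities then force `|W| > N ≥ b - 1`, too long for a zero-sum-free multiset.
      by_cases hY0 : Y = 0
      · subst hY0
        have h := sum_bounds fun x hx => hA x (hA₁ x hx)
        simp only [add_zero, Multiset.card_zero, Nat.cast_zero] at *
        have : b * (N : ℤ) < b * W.card := by linarith
        have := lt_of_mul_lt_mul_left this hb.le
        obtain ⟨i, j, h1, h2, h3, h4, -⟩ := exists_prefix_sum_eq hb (L₁ := W.toList) (L₂ := [])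
          (by simpa using hf₁) (by simpa using hf₁.mono (Multiset.zero_le _))
          (by simp; omega)
        simp at h4
        omega
      · refine hf₂ Y (Multiset.le_add_left _ _) hY0 ?_
        have := dvd_sub hd₁ hd₂
        simpa using this
    obtain ⟨U, w, V, hU, hU0, hw, hV, hVc, hd⟩ :=
      exists_exchange hb hf₁ (hf₂.mono (Multiset.le_add_left Y W)) hX0 (by omega)
    obtain ⟨X, rfl⟩ := Multiset.le_iff_exists_add.1 hU
    obtain ⟨W, rfl⟩ := Multiset.le_iff_exists_add.1 hw
    have hUc := Multiset.card_pos.2 hU0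
    obtain ⟨M, hM, hfM, hdM⟩ := exists_zeroSumFree_le b (W + X + V)
    have hMA : ∀ x ∈ M, x ∈ A := by
      intro x hx
      have hx := Multiset.mem_of_le hM hx
      simp only [Multiset.mem_add] at hx hA₁ hA₂
      rcases hx with (hx | hx) | hx
      · exact hA₁ x (by tauto)
      · exact hA₁ x (by tauto)
      · exact hA₂ x (Or.inr (Multiset.mem_of_le hV hx))
    have hdM' : b ∣ n - M.sum := by
      have h : n - M.sum = n - (w + W + (U + X)).sum + (U.sum + w.sum - V.sum) +
          ((W + X + V).sum - M.sum) := by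
        simp only [Multiset.sum_add]
        ring
      rw [h]
      exact dvd_add (dvd_add hd₁ hd) hdM
    by_cases hML : n < M.sum
    · have hle : (w + W + (U + X)) ∪ M ≤ w + W + (U + X) + V := by
        refine Multiset.union_le (Multiset.le_add_right _ _) (hM.trans ?_)
        have : w + W + (U + X) + V = (W + X + V) + (w + U) := by abel
        rw [this]
        exact Multiset.le_add_right _ _
      refine ih _ ?_ _ M (Multiset.card_le_card hle) hA₁ hMA hf₁ hfM hd₁ hdM' hR hML
      simp only [Multiset.card_add] at hm ⊢
      omega
    · by_cases hMR : b * M.card - M.sum ≤ N * b - n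
      · exact ⟨M, hMA, hdM', not_lt.1 hML, hMR⟩
      · have hle : M ∪ (w + W + Y) ≤ w + W + X + Y := by
          refine Multiset.union_le (hM.trans ?_) ?_
          · refine add_le_add (add_le_add ?_ le_rfl) hV
            exact Multiset.le_add_left _ _
          · have : w + W + X + Y = (w + W + Y) + X := by abel
            rw [this]
            exact Multiset.le_add_right _ _
        refine ih _ ?_ M _ (Multiset.card_le_card hle) hMA hA₂ hfM hf₂ hdM' hd₂
          (not_le.1 hMR) hL
        simp only [Multiset.card_add] at hm ⊢
        omega

lemma mem_nfold_of_multiset {A : Set ℤ} {N : ℕ} {x : ℤ} (S : Multiset ℤ) (hS : ∀ y ∈ S, y ∈ A)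
    (hc : S.card = N) (hx : S.sum = x) : x ∈ nfold A N := by
  subst hc hx
  induction S using Quotient.inductionOn with
  | h L =>
    refine ⟨fun i => L.get i, fun i => hS _ ?_, ?_⟩
    · exact List.get_mem L i
    · exact (Fin.sum_univ_getElem L).trans (Multiset.sum_coe L).symm

lemma mem_nfold_of_good {A : Finset ℤ} {b : ℤ} (hb : 0 < b) (h0 : 0 ∈ A) (hbA : b ∈ A)
    {N : ℕ} {n : ℤ} {S : Multiset ℤ} (hS : ∀ x ∈ S, x ∈ A) (hd : b ∣ n - S.sum)
    (h₁ : S.sum ≤ n) (h₂ : b * S.card - S.sum ≤ N * b - n) : n ∈ nfold (↑A) N := by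
  obtain ⟨k, hk⟩ := hd
  have hk0 : 0 ≤ k := by
    have : b * 0 ≤ b * k := by linarith
    exact le_of_mul_le_mul_left this hb
  lift k to ℕ using hk0
  have hle : S.card + k ≤ N := by
    have : b * ((S.card : ℤ) + k) ≤ b * N := by linarith
    exact_mod_cast le_of_mul_le_mul_left this hb
  refine mem_nfold_of_multiset
    (S + Multiset.replicate k b + Multiset.replicate (N - (S.card + k)) 0) ?_ ?_ ?_
  · intro y hy
    simp only [Multiset.mem_add] at hy
    rcases hy with (hy | hy) | hy
    · exact hS y hy
    · rw [Multiset.eq_of_mem_replicate hy]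
      exact hbA
    · rw [Multiset.eq_of_mem_replicate hy]
      exact h0
  · simp
    omega
  · simp
    linarith

lemma exists_multiset_of_mem_combos {A : Finset ℤ} {n : ℤ} (h : n ∈ combos A) :
    ∃ S : Multiset ℤ, (∀ x ∈ S, x ∈ A) ∧ S.sum = n := by
  obtain ⟨c, hc⟩ := h
  refine ⟨∑ a ∈ A, Multiset.replicate (c a) a, fun x hx => ?_, ?_⟩
  · obtain ⟨a, ha, hxa⟩ := Multiset.mem_sum.1 hx
    rw [Multiset.eq_of_mem_replicate hxa]
    exact ha
  · rw [← hc, Multiset.sum_sum]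
    simp

/-- Theorem 1: If `A ⊆ ℤ` is finite with min `0`, max `b`, gcd `1`,
`N ≥ 2⌊b/2⌋`, and `0 ≤ n ≤ N*b` with `n ∉ E(A) ∪ (N*b - E(b-A))`, then `n ∈ NA`. -/
theorem stmt4 (A : Finset ℤ) (b : ℤ) (h0 : 0 ∈ A) (hb : b ∈ A)
    (hbound : ∀ x ∈ A, 0 ≤ x ∧ x ≤ b) (hgcd : A.gcd id = 1)
    (N : ℕ) (hN : 2 * (b / 2) ≤ (N : ℤ))
    (n : ℤ) (hn0 : 0 ≤ n) (hnN : n ≤ (N : ℤ) * b)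
    (hnE : n ∉ excep A)
    (hnE' : n ∉ (fun e => (N : ℤ) * b - e) '' excep (A.image (fun a => b - a))) :
    n ∈ nfold (↑A) N := by
  have hbpos : 0 < b := by
    refine lt_of_le_of_ne (hbound b hb).1 fun h => ?_
    have : A.gcd id = 0 := Finset.gcd_eq_zero_iff.2 fun x hx => by
      have := hbound x hx
      simp only [id]
      omega
    omega
  have hc : n ∈ combos A := by
    by_contra h
    exact hnE ⟨hn0, h⟩
  have hc' : (N : ℤ) * b - n ∈ combos (A.image (fun a => b - a)) := by
    by_contra h
    exact hnE' ⟨_, ⟨by linarith, h⟩, by simp⟩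
  obtain ⟨S₁, hS₁, hsum₁⟩ := exists_multiset_of_mem_combos hc
  obtain ⟨T, hT, hsumT⟩ := exists_multiset_of_mem_combos hc'
  -- Reflecting `T` gives a multiset in `A` whose reflected sum is `N * b - n`.
  obtain ⟨S₂, hS₂, hsum₂⟩ : ∃ S₂ : Multiset ℤ, (∀ x ∈ S₂, x ∈ A) ∧
      b * S₂.card - S₂.sum = N * b - n := by
    refine ⟨T.map fun x => b - x, fun x hx => ?_, ?_⟩
    · obtain ⟨y, hy, rfl⟩ := Multiset.mem_map.1 hx
      obtain ⟨a, ha, rfl⟩ := Finset.mem_image.1 (hT y hy)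
      simpa using ha
    · rw [Multiset.sum_map_sub, ← hsumT]
      simp [mul_comm]
  obtain ⟨R₁, hle₁, hf₁, hd₁⟩ := exists_zeroSumFree_le b S₁
  obtain ⟨R₂, hle₂, hf₂, hd₂⟩ := exists_zeroSumFree_le b S₂
  have hA₁ : ∀ x ∈ R₁, x ∈ A := fun x hx => hS₁ x (Multiset.mem_of_le hle₁ hx)
  have hA₂ : ∀ x ∈ R₂, x ∈ A := fun x hx => hS₂ x (Multiset.mem_of_le hle₂ hx)
  have hb₁ := (sum_bounds_of_le (fun x hx => hbound x (hS₁ x hx)) hle₁).1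
  have hb₂ := (sum_bounds_of_le (fun x hx => hbound x (hS₂ x hx)) hle₂).2
  rw [hsum₁] at hd₁ hb₁
  rw [hsum₂] at hb₂
  have hd₂' : b ∣ n - R₂.sum := by
    have h : n - R₂.sum = b * (N - S₂.card) + (S₂.sum - R₂.sum) := by linarith
    rw [h]
    exact dvd_add (dvd_mul_right _ _) hd₂
  by_cases hg₁ : b * R₁.card - R₁.sum ≤ N * b - n
  · exact mem_nfold_of_good hbpos h0 hb hA₁ hd₁ hb₁ hg₁
  by_cases hg₂ : R₂.sum ≤ n
  · exact mem_nfold_of_good hbpos h0 hb hA₂ hd₂' hg₂ hb₂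
  obtain ⟨S, hS, hd, h₁, h₂⟩ := exists_good hbpos hbound (N := N) (by omega) _ R₁ R₂ le_rfl
    hA₁ hA₂ hf₁ hf₂ hd₁ hd₂' (not_le.1 hg₁) (not_le.1 hg₂)
  exact mem_nfold_of_good hbpos h0 hb hS hd h₁ h₂
end

section
/- (Savchev–Chen structure theorem) Let b ≥ 1 and a_1, ..., a_k be residues mod b with k ≥ ⌊b/2⌋ + 2. Then a_1 + ... + a_k ≡ 0 (mod b) with no proper nonempty subsum ≡ 0 (mod b) if and only if there exists w coprime to b and positive integers c_1, ..., c_k with c_1 + ... + c_k = b and a_j ≡ w·c_j (mod b) for all j. -/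
/-!
A minimal zero-sum of length `k` becomes, after one term is dropped, a zero-free sequence of length
`ℓ = k - 1 > b / 2`, which has at most `b` subsums (the empty one included), so at most `2ℓ - 1`.
The core is `exists_generator`: in any abelian group, a zero-free sequence with at most `2ℓ - 1`
subsums consists of positive multiples `x i • g` of a single element `g`, and the subsums of the
integers `x i` fill the whole interval `[0, ∑ x i]`.

The proof is by induction on `ℓ`. Dropping a term `a i` always loses at least one subsum, namely the
total sum.

* If some term loses at least two, the remaining sequence satisfies the induction hypothesis, with
  subsums `0, g, …, S • g` where `S ≥ ℓ - 1`. Either `a i` is one of them, and the structure extends,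
  or the translate by `a i` is disjoint from them, and there are `2 (S + 1) ≥ 2ℓ` subsums, too many.
* If every term loses exactly one, then, with `X` the set of subsums and `σ` the total, translation
  by any term takes `X \ {σ}` onto `X \ {0}`. Hence both sets are invariant under the difference
  `d` of any two terms. Since `0` is in the first, so is `d`; if `d ≠ 0`, then `d` is in the second,
  and so is `d - d = 0`, which is absurd (`eq_of_card_le`). The sequence is therefore constant.

In `ZMod b`, the element `g` has order exceeding `S > b / 2`, hence order `b`, so it is a unit; the
dropped term is `-S • g = (b - S) • g`.
-/

section Subsums

set_option linter.unusedSectionVars false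

variable {ι G : Type*} [DecidableEq ι] [AddCommGroup G] [DecidableEq G]

/-- The set of subsums of the sequence `a` restricted to the index set `s`, including the empty
subsum `0`. -/
def subsums (a : ι → G) (s : Finset ι) : Finset G :=
  s.powerset.image fun t => ∑ i ∈ t, a i

/-- No nonempty subsequence of `a` indexed within `s` has sum zero. -/
def ZeroFree (a : ι → G) (s : Finset ι) : Prop :=
  ∀ t ⊆ s, t.Nonempty → ∑ i ∈ t, a i ≠ 0

theorem mem_subsums {a : ι → G} {s : Finset ι} {y : G} :
    y ∈ subsums a s ↔ ∃ t ⊆ s, ∑ i ∈ t, a i = y := by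
  simp [subsums]

theorem subsums_mono (a : ι → G) {s t : Finset ι} (h : s ⊆ t) : subsums a s ⊆ subsums a t :=
  Finset.image_subset_image (Finset.powerset_mono.2 h)

theorem zero_mem_subsums (a : ι → G) (s : Finset ι) : (0 : G) ∈ subsums a s :=
  mem_subsums.2 ⟨∅, by simp, by simp⟩

theorem add_mem_subsums {a : ι → G} {s : Finset ι} {i : ι} (hi : i ∈ s) {y : G}
    (hy : y ∈ subsums a (s.erase i)) : y + a i ∈ subsums a s := by
  obtain ⟨t, ht, rfl⟩ := mem_subsums.1 hy
  have hit : i ∉ t := fun h => by simpa using ht h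
  refine mem_subsums.2 ⟨insert i t, ?_, ?_⟩
  · exact Finset.insert_subset hi (ht.trans (Finset.erase_subset _ _))
  · rw [Finset.sum_insert hit, add_comm]

theorem add_ne_zero_of_zeroFree {a : ι → G} {s : Finset ι} (hz : ZeroFree a s) {i : ι} (hi : i ∈ s)
    {y : G} (hy : y ∈ subsums a (s.erase i)) : y + a i ≠ 0 := by
  obtain ⟨t, ht, rfl⟩ := mem_subsums.1 hy
  have hit : i ∉ t := fun h => by simpa using ht h
  have := hz (insert i t) (Finset.insert_subset hi (ht.trans (Finset.erase_subset _ _)))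
    (Finset.insert_nonempty _ _)
  rwa [Finset.sum_insert hit, add_comm] at this

/-- If the total were a subsum avoiding `i`, the complementary subsequence, which contains `i`,
would sum to zero. -/
theorem sum_notMem_subsums_erase {a : ι → G} {s : Finset ι} (hz : ZeroFree a s) {i : ι}
    (hi : i ∈ s) : ∑ j ∈ s, a j ∉ subsums a (s.erase i) := by
  intro h
  obtain ⟨t, ht, hsum⟩ := mem_subsums.1 h
  have hit : i ∉ t := fun h => by simpa using ht h
  have hts : t ⊆ s := ht.trans (Finset.erase_subset _ _)
  refine hz (s \ t) Finset.sdiff_subset ⟨i, by simp [hi, hit]⟩ ?_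
  have := Finset.sum_sdiff (f := a) hts
  rw [hsum] at this
  simpa using this

theorem sum_mem_subsums (a : ι → G) (s : Finset ι) : ∑ j ∈ s, a j ∈ subsums a s :=
  mem_subsums.2 ⟨s, subset_rfl, rfl⟩

/-- When dropping `i` loses only one subsum, the lost one is the total. -/
theorem subsums_erase_eq {a : ι → G} {s : Finset ι} (hz : ZeroFree a s) {i : ι} (hi : i ∈ s)
    (hc : (subsums a s).card ≤ (subsums a (s.erase i)).card + 1) :
    subsums a (s.erase i) = (subsums a s).erase (∑ j ∈ s, a j) := by
  apply Finset.eq_of_subset_of_card_le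
  · intro y hy
    refine Finset.mem_erase.2 ⟨?_, subsums_mono a (Finset.erase_subset _ _) hy⟩
    rintro rfl
    exact sum_notMem_subsums_erase hz hi hy
  · rw [Finset.card_erase_of_mem (sum_mem_subsums a s)]
    omega

/-- When dropping `i` loses only one subsum, translation by `a i` maps the subsums other than the
total onto the nonzero subsums. -/
theorem image_add_eq {a : ι → G} {s : Finset ι} (hz : ZeroFree a s) {i : ι} (hi : i ∈ s)
    (hc : (subsums a s).card ≤ (subsums a (s.erase i)).card + 1) :
    ((subsums a s).erase (∑ j ∈ s, a j)).image (· + a i) = (subsums a s).erase 0 := by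
  apply Finset.eq_of_subset_of_card_le
  · intro y hy
    rw [← subsums_erase_eq hz hi hc] at hy
    obtain ⟨z, hzm, rfl⟩ := Finset.mem_image.1 hy
    exact Finset.mem_erase.2 ⟨add_ne_zero_of_zeroFree hz hi hzm, add_mem_subsums hi hzm⟩
  · rw [Finset.card_image_of_injective _ (add_left_injective _),
      Finset.card_erase_of_mem (sum_mem_subsums a s),
      Finset.card_erase_of_mem (zero_mem_subsums a s)]

/-- Two terms, each of whose omission loses only one subsum, are equal. -/
theorem eq_of_card_le {a : ι → G} {s : Finset ι} (hz : ZeroFree a s) {i j : ι}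
    (hi : i ∈ s) (hj : j ∈ s)
    (hci : (subsums a s).card ≤ (subsums a (s.erase i)).card + 1)
    (hcj : (subsums a s).card ≤ (subsums a (s.erase j)).card + 1) : a i = a j := by
  have hBi := image_add_eq hz hi hci
  have hBj := image_add_eq hz hj hcj
  have h0 : (0 : G) ∈ (subsums a s).erase (∑ j ∈ s, a j) := by
    rw [← subsums_erase_eq hz hi hci]
    exact zero_mem_subsums _ _
  set B := (subsums a s).erase (∑ j ∈ s, a j) with hB
  by_contra hne
  -- `d = a i - a j` lies in `B`, since `a i = 0 + a i` is also of the form `y + a j` with `y ∈ B`.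
  have hd : a i - a j ∈ B := by
    have h1 : (0 : G) + a i ∈ (subsums a s).erase 0 := hBi ▸ Finset.mem_image_of_mem _ h0
    rw [← hBj] at h1
    obtain ⟨y, hy, hya⟩ := Finset.mem_image.1 h1
    have : a i - a j = y := by
      rw [sub_eq_iff_eq_add, ← zero_add (a i)]; exact hya.symm
    rwa [this]
  -- Being nonzero, `d` equals `y + a i` with `y ∈ B`, so `0 = y + a j` would be a nonzero subsum.
  have h2 : a i - a j ∈ (subsums a s).erase 0 :=
    Finset.mem_erase.2 ⟨sub_ne_zero.2 hne, Finset.mem_of_mem_erase hd⟩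
  rw [← hBi] at h2
  obtain ⟨y, hy, hya⟩ := Finset.mem_image.1 h2
  have h3 : y + a j ∈ (subsums a s).erase 0 := hBj ▸ Finset.mem_image_of_mem _ hy
  have h4 : y + a j = 0 := by
    have : y + a i = a i - a j := hya
    have : y = - a j := by
      have h5 : y = a i - a j - a i := by rw [← this]; abel
      rw [h5]; abel
    rw [this]; abel
  exact (Finset.mem_erase.1 h3).1 h4

theorem card_le_sum_of_pos {x : ι → ℕ} {s : Finset ι} (h : ∀ i ∈ s, 0 < x i) :
    s.card ≤ ∑ i ∈ s, x i := by
  simpa using Finset.card_nsmul_le_sum s x 1 (fun i hi => h i hi)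

theorem sum_eq_nsmul {a : ι → G} {x : ι → ℕ} {g : G} {s t : Finset ι} (hts : t ⊆ s)
    (h : ∀ i ∈ s, a i = x i • g) : ∑ i ∈ t, a i = (∑ i ∈ t, x i) • g := by
  rw [Finset.sum_smul]
  exact Finset.sum_congr rfl fun i hi => h i (hts hi)

theorem nsmul_ne_zero_of_zeroFree {a : ι → G} {s : Finset ι} (hz : ZeroFree a s) {g : G}
    {x : ι → ℕ} (hx : ∀ i ∈ s, a i = x i • g)
    (hfull : ∀ m ≤ ∑ i ∈ s, x i, ∃ t ⊆ s, ∑ i ∈ t, x i = m)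
    {m : ℕ} (hm0 : 0 < m) (hm : m ≤ ∑ i ∈ s, x i) : m • g ≠ 0 := by
  obtain ⟨t, ht, rfl⟩ := hfull m hm
  rw [← sum_eq_nsmul ht hx]
  refine hz t ht ?_
  rw [Finset.nonempty_iff_ne_empty]
  rintro rfl
  simp at hm0

/-- A zero-free sequence of length `ℓ` with at most `2ℓ - 1` subsums (the empty one included)
consists of positive multiples `x i • g` of one element, and every integer from `0` to `∑ x i` is a
subsum of `x`. -/
theorem exists_generator (a : ι → G) (s : Finset ι) (hz : ZeroFree a s)
    (hc : (subsums a s).card + 1 ≤ 2 * s.card) :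
    ∃ (g : G) (x : ι → ℕ), (∀ i ∈ s, 0 < x i) ∧ (∀ i ∈ s, a i = x i • g) ∧
      ∀ m ≤ ∑ i ∈ s, x i, ∃ t ⊆ s, ∑ i ∈ t, x i = m := by
  induction hn : s.card generalizing s with
  | zero => omega
  | succ n ih =>
    obtain ⟨i₀, hi₀⟩ : s.Nonempty := Finset.card_pos.1 (by omega)
    by_cases hall : ∀ i ∈ s, (subsums a s).card ≤ (subsums a (s.erase i)).card + 1
    · refine ⟨a i₀, fun _ => 1, fun _ _ => one_pos, fun i hi => ?_, fun m hm => ?_⟩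
      · rw [one_smul]
        exact eq_of_card_le hz hi hi₀ (hall i hi) (hall i₀ hi₀)
      · obtain ⟨t, ht, htc⟩ := Finset.exists_subset_card_eq (s := s) (n := m) (by simpa using hm)
        exact ⟨t, ht, by simpa using htc⟩
    · push Not at hall
      obtain ⟨i, hi, hlt⟩ := hall
      have hcard := Finset.card_erase_of_mem hi
      have hz' : ZeroFree a (s.erase i) := fun t ht => hz t (ht.trans (Finset.erase_subset _ _))
      obtain ⟨g, x, hpos, hx, hfull⟩ := ih (s.erase i) hz' (by omega) (by omega)
      have hne := @nsmul_ne_zero_of_zeroFree _ _ _ _ _ _ _ hz' _ _ hx hfull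
      have hmem : ∀ m ≤ ∑ j ∈ s.erase i, x j, m • g ∈ subsums a (s.erase i) := by
        intro m hm
        obtain ⟨t, ht, rfl⟩ := hfull m hm
        exact mem_subsums.2 ⟨t, ht, sum_eq_nsmul ht hx⟩
      have hS := card_le_sum_of_pos hpos
      set S := ∑ j ∈ s.erase i, x j with hSdef
      by_cases ht : ∃ t ≤ S, a i = t • g
      · obtain ⟨t, htS, hat⟩ := ht
        have ht0 : 0 < t := by
          rcases Nat.eq_zero_or_pos t with rfl | h
          · exact absurd (by simpa using hat) (by
              simpa using add_ne_zero_of_zeroFree hz hi (zero_mem_subsums a (s.erase i)))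
          · exact h
        have hupd : ∀ u ⊆ s.erase i, ∑ j ∈ u, Function.update x i t j = ∑ j ∈ u, x j := by
          intro u hu
          refine Finset.sum_congr rfl fun j hj => ?_
          rw [Function.update_of_ne (Finset.ne_of_mem_erase (hu hj))]
        refine ⟨g, Function.update x i t, fun j hj => ?_, fun j hj => ?_, fun m hm => ?_⟩
        · rcases eq_or_ne j i with rfl | hji
          · simpa using ht0
          · simpa [hji] using hpos j (Finset.mem_erase.2 ⟨hji, hj⟩)
        · rcases eq_or_ne j i with rfl | hji
          · simpa using hat
          · simpa [hji] using hx j (Finset.mem_erase.2 ⟨hji, hj⟩)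
        · rw [← Finset.add_sum_erase _ _ hi, hupd _ subset_rfl, Function.update_self,
            ← hSdef] at hm
          rcases le_or_gt m S with hmS | hmS
          · obtain ⟨u, hu, hum⟩ := hfull m hmS
            exact ⟨u, hu.trans (Finset.erase_subset _ _), by rw [hupd u hu, hum]⟩
          · obtain ⟨u, hu, hum⟩ := hfull (m - t) (by omega)
            have hiu : i ∉ u := fun h => by simpa using hu h
            refine ⟨insert i u,
              Finset.insert_subset hi (hu.trans (Finset.erase_subset _ _)), ?_⟩
            rw [Finset.sum_insert hiu, hupd u hu, hum, Function.update_self]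
            omega
      · exfalso
        push Not at ht
        have hinj : Set.InjOn (fun m : ℕ => m • g) (Finset.range (S + 1)) := by
          have key : ∀ p q : ℕ, p < q → q ≤ S → p • g ≠ q • g := by
            intro p q hpq hq h
            apply hne (m := q - p) (by omega) (by omega)
            rw [← Nat.sub_add_cancel hpq.le, add_smul] at h
            simpa using h
          intro p hp q hq hpq
          simp only [Finset.coe_range, Set.mem_Iio] at hp hq
          rcases lt_trichotomy p q with h | h | h
          · exact absurd hpq (key p q h (by omega))
          · exact h
          · exact absurd hpq.symm (key q p h (by omega))
        set P := (Finset.range (S + 1)).image (fun m : ℕ => m • g) with hP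
        have hPc : P.card = S + 1 := by
          rw [hP, Finset.card_image_of_injOn hinj, Finset.card_range]
        have hPsub : P ⊆ subsums a (s.erase i) := by
          intro y hy
          obtain ⟨m, hm, rfl⟩ := Finset.mem_image.1 hy
          exact hmem m (by simpa [Nat.lt_succ_iff] using hm)
        -- A common element `p • g = q • g + a i` makes `a i` one of the first `S` multiples of `g`
        -- if `q ≤ p`, and produces the zero subsum `(q - p) • g + a i` otherwise.
        have hdisj : Disjoint P (P.image (· + a i)) := by
          rw [Finset.disjoint_left]
          intro y hy hy'
          obtain ⟨p, hp, rfl⟩ := Finset.mem_image.1 hy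
          obtain ⟨z, hz1, hz2⟩ := Finset.mem_image.1 hy'
          obtain ⟨q, hq, rfl⟩ := Finset.mem_image.1 hz1
          rw [Finset.mem_range] at hp hq
          rcases le_or_gt q p with h | h
          · apply ht (p - q) (by omega)
            rw [← Nat.sub_add_cancel h, add_smul, add_comm ((p - q) • g)] at hz2
            simpa using hz2
          · apply add_ne_zero_of_zeroFree hz hi (hmem (q - p) (by omega))
            rw [← Nat.sub_add_cancel h.le, add_smul] at hz2
            have h6 : p • g + ((q - p) • g + a i) = p • g + 0 := by
              rw [add_zero, ← add_assoc, add_comm (p • g)]; exact hz2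
            exact add_left_cancel h6
        have hsub : P ∪ P.image (· + a i) ⊆ subsums a s := by
          refine Finset.union_subset (hPsub.trans (subsums_mono a (Finset.erase_subset _ _))) ?_
          intro y hy
          obtain ⟨z, hzP, rfl⟩ := Finset.mem_image.1 hy
          exact add_mem_subsums hi (hPsub hzP)
        have := Finset.card_le_card hsub
        rw [Finset.card_union_of_disjoint hdisj,
          Finset.card_image_of_injective _ (add_left_injective _), hPc] at this
        omega

end Subsums

theorem ZMod.isUnit_of_addOrderOf_eq {b : ℕ} [NeZero b] {g : ZMod b} (h : addOrderOf g = b) :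
    IsUnit g := by
  have h1 := ZMod.addOrderOf_coe g.val (NeZero.ne b)
  rw [ZMod.natCast_zmod_val, h] at h1
  have hpos : 0 < b := Nat.pos_of_ne_zero (NeZero.ne b)
  have hdvd := Nat.gcd_dvd_left b g.val
  have h2 : b.gcd g.val = 1 := by
    have h3 := Nat.div_mul_cancel hdvd
    rw [← h1] at h3
    exact Nat.eq_of_mul_eq_mul_left hpos (by omega)
  rw [← ZMod.natCast_zmod_val g, ZMod.isUnit_iff_coprime]
  exact Nat.Coprime.symm h2

/-- Savchev–Chen structure theorem: for `b ≥ 1` and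
`k ≥ ⌊b/2⌋ + 2` residues `a_1, …, a_k` mod `b`, the sequence is a minimal
zero-sum (sum ≡ 0 mod b, no proper nonempty subsum ≡ 0) if and only if there
is a unit `w` mod `b` and positive integers `c_j` summing to `b` with
`a_j ≡ w·c_j (mod b)` for all `j`. -/
theorem stmt11 (b : ℕ) (hb : 1 ≤ b) (k : ℕ) (hk : b / 2 + 2 ≤ k)
    (a : Fin k → ZMod b) :
    ((∑ i, a i = 0) ∧
      ∀ s : Finset (Fin k), s.Nonempty → s ≠ Finset.univ → ∑ i ∈ s, a i ≠ 0)
    ↔ ∃ (w : (ZMod b)ˣ) (c : Fin k → ℕ),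
        (∀ j, 0 < c j) ∧ (∑ j, c j = b) ∧
        ∀ j, a j = (w : ZMod b) * (c j : ZMod b) := by
  have : NeZero b := ⟨by omega⟩
  constructor
  · rintro ⟨hsum, hmin⟩
    let i₀ : Fin k := ⟨0, by omega⟩
    have hcard : (Finset.univ.erase i₀).card = k - 1 := by
      rw [Finset.card_erase_of_mem (Finset.mem_univ _), Finset.card_fin]
    have hz : ZeroFree a (Finset.univ.erase i₀) := fun t ht hne =>
      hmin t hne fun h => by simpa using @ht i₀ (by simp [h])
    have hX : (subsums a (Finset.univ.erase i₀)).card ≤ b :=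
      (Finset.card_le_univ _).trans (ZMod.card b).le
    obtain ⟨g, x, hpos, hx, hfull⟩ := exists_generator a (Finset.univ.erase i₀) hz (by omega)
    have hS := card_le_sum_of_pos hpos
    have hne := @nsmul_ne_zero_of_zeroFree _ _ _ _ _ _ _ hz _ _ hx hfull
    have hlast : a i₀ + (∑ j ∈ Finset.univ.erase i₀, x j) • g = 0 := by
      rw [← sum_eq_nsmul subset_rfl hx, Finset.add_sum_erase _ _ (Finset.mem_univ _), hsum]
    set S := ∑ j ∈ Finset.univ.erase i₀, x j with hSdef
    have hbg : b • g = 0 := by simp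
    have hSb : S < b := by
      by_contra h
      exact hne hb (by omega) hbg
    have hord : addOrderOf g = b := by
      obtain ⟨e, he⟩ := addOrderOf_dvd_of_nsmul_eq_zero hbg
      have hlt : S < addOrderOf g := by
        by_contra h
        exact hne (addOrderOf_pos g) (by omega) (addOrderOf_nsmul_eq_zero g)
      -- The order is a divisor of `b` exceeding `b / 2`.
      have he2 : e < 2 := by
        by_contra h
        have : addOrderOf g * 2 ≤ addOrderOf g * e := Nat.mul_le_mul_left _ (by omega)
        omega
      interval_cases e
      · omega
      · omega
    obtain ⟨w, rfl⟩ := ZMod.isUnit_of_addOrderOf_eq hord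
    refine ⟨w, Function.update x i₀ (b - S), fun j => ?_, ?_, fun j => ?_⟩
    · rcases eq_or_ne j i₀ with rfl | hj
      · simpa using hSb
      · simpa [hj] using hpos j (by simp [hj])
    · rw [← Finset.add_sum_erase _ _ (Finset.mem_univ i₀), Function.update_self,
        Finset.sum_congr rfl fun j hj => Function.update_of_ne (Finset.ne_of_mem_erase hj) _ _,
        ← hSdef]
      omega
    · rcases eq_or_ne j i₀ with rfl | hj
      · rw [Function.update_self, Nat.cast_sub hSb.le, ZMod.natCast_self]
        rw [nsmul_eq_mul] at hlast
        linear_combination hlast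
      · rw [Function.update_of_ne hj, hx j (by simp [hj]), nsmul_eq_mul, mul_comm]
  · rintro ⟨w, c, hpos, hsum, ha⟩
    have hsub : ∀ s : Finset (Fin k), ∑ i ∈ s, a i = w * ((∑ i ∈ s, c i : ℕ) : ZMod b) := by
      intro s
      rw [Nat.cast_sum, Finset.mul_sum]
      exact Finset.sum_congr rfl fun i _ => ha i
    refine ⟨by rw [hsub, hsum]; simp, fun s hs hsu h => ?_⟩
    rw [hsub, Units.mul_right_eq_zero, ZMod.natCast_eq_zero_iff] at h
    have h1 : 0 < ∑ i ∈ s, c i := Finset.sum_pos (fun i _ => hpos i) hs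
    have h2 : ∑ i ∈ s, c i < b := by
      obtain ⟨j, hj⟩ : ∃ j, j ∉ s := by
        by_contra! hall
        exact hsu (Finset.eq_univ_iff_forall.2 hall)
      rw [← hsum]
      exact Finset.sum_lt_sum_of_subset (Finset.subset_univ s) (Finset.mem_univ j) hj (hpos j)
        fun _ _ _ => Nat.zero_le _
    exact absurd (Nat.le_of_dvd h1 h) (by omega)
end
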